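/- arXiv:2109.01371 — 2 statements merged into one kernel-verified Lean document; each statement's English description precedes it below -/
import Mathlib

section
/- There exist ternary operations t_0,…,t_4 on {0,1,2}, each preserving C_3, ≤_2, and B_n for every n ≥ 2, satisfying the quasi Jónsson condition QJ(4); and there do NOT exist ternary operations t_0,…,t_4 on {0,1,2}, each preserving C_3 and R^=_2, satisfying QJ(4). -/
/-- The three-element domain `{0,1,2}`. -/
abbrev D3 : Type := Fin 3

/-- `n`-ary operations on `{0,1,2}`. -/
abbrev Op (n : ℕ) : Type := (Fin n → D3) → D3

/-- An `n`-ary operation `f` preserves a `k`-ary relation `R`. -/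
def Preserves {n k : ℕ} (f : Op n) (R : Set (Fin k → D3)) : Prop :=
  ∀ t : Fin n → (Fin k → D3), (∀ i, t i ∈ R) → (fun j => f fun i => t i j) ∈ R

/-- `C₃ = {(0,1),(1,2),(2,0)}`. -/
def C3rel : Set (Fin 2 → D3) :=
  { t | (t 0 = 0 ∧ t 1 = 1) ∨ (t 0 = 1 ∧ t 1 = 2) ∨ (t 0 = 2 ∧ t 1 = 0) }

/-- `≤₂ = {(0,0),(0,1),(1,1)}`. -/
def le2rel : Set (Fin 2 → D3) :=
  { t | (t 0 = 0 ∧ t 1 = 0) ∨ (t 0 = 0 ∧ t 1 = 1) ∨ (t 0 = 1 ∧ t 1 = 1) }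

/-- `B_k = {0,1}^k \ {(0,…,0)}`. -/
def BnRel (k : ℕ) : Set (Fin k → D3) :=
  { t | (∀ i, t i = 0 ∨ t i = 1) ∧ ¬ ∀ i, t i = 0 }

/-- `R⁼₂ = {(x,y,z) : x ∈ {0,1} ∧ (x = 0 → y = z ∈ {0,1})}`. -/
def Req2rel : Set (Fin 3 → D3) :=
  { t | (t 0 = 0 ∨ t 0 = 1) ∧ (t 0 = 0 → t 1 = t 2 ∧ (t 1 = 0 ∨ t 1 = 1)) }

/-- The quasi Jónsson condition `QJ(4)` for ternary operations `t₀,…,t₄`. -/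
def QJ4 (t0 t1 t2 t3 t4 : Op 3) : Prop :=
  (∀ x y z : D3, t0 ![x, y, z] = t0 ![x, x, x]) ∧
  (∀ x y z : D3, t4 ![x, y, z] = t4 ![z, z, z]) ∧
  (∀ x y : D3, t0 ![x, y, x] = t0 ![x, x, x] ∧ t1 ![x, y, x] = t1 ![x, x, x] ∧
    t2 ![x, y, x] = t2 ![x, x, x] ∧ t3 ![x, y, x] = t3 ![x, x, x] ∧
    t4 ![x, y, x] = t4 ![x, x, x]) ∧
  (∀ x z : D3, t0 ![x, x, z] = t1 ![x, x, z] ∧ t2 ![x, x, z] = t3 ![x, x, z]) ∧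
  (∀ x z : D3, t1 ![x, z, z] = t2 ![x, z, z] ∧ t3 ![x, z, z] = t4 ![x, z, z])

/-- Preserving `C₃`, `≤₂` and `B_k` for every `k ≥ 2`. -/
def PresMinf (f : Op 3) : Prop :=
  Preserves f C3rel ∧ Preserves f le2rel ∧ ∀ k, 2 ≤ k → Preserves f (BnRel k)

/-- Preserving `C₃` and `R⁼₂`. -/
def PresQ (f : Op 3) : Prop := Preserves f C3rel ∧ Preserves f Req2rel

def jn (x y : D3) : D3 := if y = x + 1 then y else x

def g0 (x _y _z : D3) : D3 := x

def g1 (x y z : D3) : D3 := if y = z then jn x y else x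

def g2 (x _y z : D3) : D3 := jn x z

def g3 (x y z : D3) : D3 := if x = y then jn x z else z

def g4 (_x _y z : D3) : D3 := z

theorem vec3 (v : Fin 3 → D3) : v = ![v 0, v 1, v 2] := by
  ext i; fin_cases i <;> rfl

theorem presMinf_of (g : D3 → D3 → D3 → D3) (i : Fin 3)
    (hc : ∀ x y z, g (x + 1) (y + 1) (z + 1) = g x y z + 1)
    (h01 : ∀ x y z, x ≠ 2 → y ≠ 2 → z ≠ 2 → g x y z ≠ 2)
    (hm : ∀ x y z x' y' z', x' ≠ 2 → y' ≠ 2 → z' ≠ 2 → x ≤ x' → y ≤ y' → z ≤ z' →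
      g x y z ≤ g x' y' z')
    (hi : ∀ x y z, x ≠ 2 → y ≠ 2 → z ≠ 2 → ![x, y, z] i = 1 → g x y z = 1) :
    PresMinf (fun v => g (v 0) (v 1) (v 2)) := by
  have c3 : ∀ a b : D3, ((a = 0 ∧ b = 1) ∨ (a = 1 ∧ b = 2) ∨ (a = 2 ∧ b = 0)) ↔ b = a + 1 := by
    decide
  have l2 : ∀ a b : D3, ((a = 0 ∧ b = 0) ∨ (a = 0 ∧ b = 1) ∨ (a = 1 ∧ b = 1)) ↔
      (b ≠ 2 ∧ a ≤ b) := by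
    decide
  have z1 : ∀ a : D3, (a = 0 ∨ a = 1) ↔ a ≠ 2 := by decide
  refine ⟨?_, ?_, ?_⟩
  · intro t ht
    simp only [C3rel, Set.mem_ofPred_eq, c3] at ht ⊢
    rw [ht 0, ht 1, ht 2, hc]
  · intro t ht
    simp only [le2rel, Set.mem_ofPred_eq, l2] at ht ⊢
    exact ⟨h01 _ _ _ (ht 0).1 (ht 1).1 (ht 2).1,
      hm _ _ _ _ _ _ (ht 0).1 (ht 1).1 (ht 2).1 (ht 0).2 (ht 1).2 (ht 2).2⟩
  · intro k _ t ht
    simp only [BnRel, Set.mem_ofPred_eq, z1] at ht ⊢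
    refine ⟨fun j => h01 _ _ _ ((ht 0).1 j) ((ht 1).1 j) ((ht 2).1 j), fun h => (ht i).2 ?_⟩
    intro j
    rcases (z1 _).2 ((ht i).1 j) with h0 | h1
    · exact h0
    · exfalso
      have := hi (t 0 j) (t 1 j) (t 2 j) ((ht 0).1 j) ((ht 1).1 j) ((ht 2).1 j)
        (by refine Eq.trans ?_ h1; fin_cases i <;> rfl)
      rw [h j] at this
      exact absurd this (by decide)

theorem presQ_idem {f : Op 3} (hf : PresQ f) : f ![0, 0, 0] = 0 ∧ f ![1, 1, 1] = 1 := by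
  have e : ∀ a : D3, (fun _ : Fin 3 => a) = ![a, a, a] := fun a => vec3 _
  have h1 := hf.1 (fun _ => ![0, 1]) (fun _ => by simp [C3rel])
  have h2 := (hf.2 (fun _ => ![0, 0, 0]) (fun _ => by simp [Req2rel])).1
  have h3 := (hf.2 (fun _ => ![1, 1, 1]) (fun _ => by simp [Req2rel])).1
  simp only [C3rel, Set.mem_ofPred_eq, Matrix.cons_val_zero, Matrix.cons_val_one, e] at h1 h2 h3
  generalize f ![0, 0, 0] = a at *
  generalize f ![1, 1, 1] = b at *
  revert a b
  decide

theorem presQ_key {f : Op 3} (hf : PresQ f) (a b c : Fin 3 → D3)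
    (h : ∀ i, (a i = 0 ∨ a i = 1) ∧ (a i = 0 → b i = c i ∧ (b i = 0 ∨ b i = 1)))
    (ha : f a = 0) : f b = f c :=
  ((hf.2 (fun i => ![a i, b i, c i]) h).2 ha).1

/-- `QJ(4)` holds in `M_∞` but not in `Q`. -/
theorem stmt16 :
    (∃ t0 t1 t2 t3 t4 : Op 3, PresMinf t0 ∧ PresMinf t1 ∧ PresMinf t2 ∧ PresMinf t3 ∧
      PresMinf t4 ∧ QJ4 t0 t1 t2 t3 t4) ∧
    ¬ (∃ t0 t1 t2 t3 t4 : Op 3, PresQ t0 ∧ PresQ t1 ∧ PresQ t2 ∧ PresQ t3 ∧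
      PresQ t4 ∧ QJ4 t0 t1 t2 t3 t4) := by
  constructor
  · refine ⟨fun v => g0 (v 0) (v 1) (v 2),
      fun v => g1 (v 0) (v 1) (v 2),
      fun v => g2 (v 0) (v 1) (v 2),
      fun v => g3 (v 0) (v 1) (v 2),
      fun v => g4 (v 0) (v 1) (v 2),
      presMinf_of g0 0 (by decide) (by decide) (by decide +kernel) (by decide),
      presMinf_of g1 0 (by decide) (by decide) (by decide +kernel) (by decide),
      presMinf_of g2 0 (by decide) (by decide) (by decide +kernel) (by decide),
      presMinf_of g3 2 (by decide) (by decide) (by decide +kernel) (by decide),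
      presMinf_of g4 2 (by decide) (by decide) (by decide +kernel) (by decide), ?_⟩
    unfold QJ4
    decide
  · rintro ⟨t0, t1, t2, t3, t4, -, p1, p2, p3, p4, q0, q4, qs, qe, qo⟩
    have a1 : t1 ![0, 1, 0] = 0 := (qs 0 1).2.1.trans (presQ_idem p1).1
    have b1 : t1 ![0, 0, 1] = 0 := by
      have h0 : t0 ![0, 0, 1] = t0 ![0, 0, 0] := q0 0 0 1
      have h1 := (qe 0 1).1
      have h2 := (qe 0 0).1
      rw [← h1, h0, h2, (presQ_idem p1).1]
    have c1 : t1 ![0, 1, 1] = 0 := (presQ_key p1 ![0, 0, 1] ![0, 1, 1] ![0, 1, 0] (by decide) b1).trans a1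
    have c2 : t2 ![0, 1, 1] = 0 := (qo 0 1).1.symm.trans c1
    have b2 : t2 ![0, 0, 1] = 0 := (presQ_key p2 ![0, 1, 1] ![0, 0, 1] ![0, 1, 1] (by decide) c2).trans c2
    have b3 : t3 ![0, 0, 1] = 0 := (qe 0 1).2.symm.trans b2
    have a3 : t3 ![0, 1, 0] = 0 := (qs 0 1).2.2.2.1.trans (presQ_idem p3).1
    have c3 : t3 ![0, 1, 1] = 0 := (presQ_key p3 ![0, 0, 1] ![0, 1, 1] ![0, 1, 0] (by decide) b3).trans a3
    have d3 : t3 ![0, 1, 1] = 1 := ((qo 0 1).2.trans (q4 0 1 1)).trans (presQ_idem p4).2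
    rw [c3] at d3
    exact absurd d3 (by decide)
end

section
/- For every n ≥ 2: there exists an (n+1)-ary operation on {0,1,2} that preserves C_3, ≤_2, and B_k for every k with 2 ≤ k ≤ n and satisfies the quasi near-unanimity condition QNU(n+1); and there is no (n+1)-ary operation on {0,1,2} that preserves C_3 and B_k for every k with 2 ≤ k ≤ n+1 and satisfies QNU(n+1). -/
/-- The quasi near-unanimity condition `QNU(m)`. -/
def QNU {m : ℕ} (t : Op m) : Prop :=
  ∀ x y : D3, ∀ j : Fin m, t (fun i => if i = j then y else x) = t fun _ => x

def gg {m : ℕ} (x : Fin m → D3) : D3 :=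
  if 2 ≤ (Finset.univ.filter fun i => x i = 1).card then 1 else 0

def ff {n : ℕ} (x : Fin (n+1) → D3) : D3 :=
  if ∀ i, x i ≠ 2 then gg x
  else if ∀ i, x i ≠ 0 then gg (fun i => x i - 1) + 1
  else if ∀ i, x i ≠ 1 then gg (fun i => x i - 2) + 2
  else x 0

lemma gg_zero {m : ℕ} : gg (fun _ : Fin m => (0 : D3)) = 0 := by
  simp [gg]

lemma gg_one {n : ℕ} (hn : 2 ≤ n) : gg (fun _ : Fin (n+1) => (1 : D3)) = 1 := by
  simp only [gg, Finset.filter_true, Finset.card_univ, Fintype.card_fin]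
  rw [if_pos (by omega)]

lemma ffA {n : ℕ} (x : Fin (n+1) → D3) (h : ∀ i, x i ≠ 2) : ff x = gg x := by
  rw [ff, if_pos h]

lemma ffB {n : ℕ} (hn : 2 ≤ n) (x : Fin (n+1) → D3) (h : ∀ i, x i ≠ 0) :
    ff x = gg (fun i => x i - 1) + 1 := by
  by_cases h2 : ∀ i, x i ≠ 2
  · have e : x = fun _ => 1 := by
      funext i
      have := h i; have := h2 i
      generalize x i = a at *
      revert a; decide
    subst e
    rw [ffA _ h2, gg_one hn]
    simp [gg_zero]
  · rw [ff, if_neg h2, if_pos h]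

lemma ffC {n : ℕ} (hn : 2 ≤ n) (x : Fin (n+1) → D3) (h : ∀ i, x i ≠ 1) :
    ff x = gg (fun i => x i - 2) + 2 := by
  by_cases h2 : ∀ i, x i ≠ 2
  · have e : x = fun _ => 0 := by
      funext i
      have := h i; have := h2 i
      generalize x i = a at *
      revert a; decide
    subst e
    have : (fun _ : Fin (n+1) => (0:D3) - 2) = fun _ => 1 := by funext; decide
    rw [ffA _ h2, gg_zero, this, gg_one hn]; decide
  · by_cases h0 : ∀ i, x i ≠ 0
    · have e : x = fun _ => 2 := by
        funext i
        have := h i; have := h0 i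
        generalize x i = a at *
        revert a; decide
      subst e
      have e1 : (fun _ : Fin (n+1) => (2:D3) - 1) = fun _ => 1 := by funext; decide
      have e2 : (fun _ : Fin (n+1) => (2:D3) - 2) = fun _ => 0 := by funext; decide
      rw [ffB hn _ h0, e1, e2, gg_zero, gg_one hn]; decide
    · rw [ff, if_neg h2, if_neg h0, if_pos h]

lemma ff_shift {n : ℕ} (hn : 2 ≤ n) (x : Fin (n+1) → D3) :
    ff (fun i => x i + 1) = ff x + 1 := by
  have d1 : ∀ a : D3, a + 1 ≠ 0 ↔ a ≠ 2 := by decide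
  have d2 : ∀ a : D3, a + 1 ≠ 1 ↔ a ≠ 0 := by decide
  have d3 : ∀ a : D3, a + 1 ≠ 2 ↔ a ≠ 1 := by decide
  have d4 : ∀ a : D3, a + 1 - 1 = a := by decide
  have d5 : ∀ a : D3, a + 1 - 2 = a - 1 := by decide
  have d6 : ∀ a : D3, a + 1 = a - 2 := by decide
  have d7 : ∀ a : D3, a + 1 + 1 = a + 2 := by decide
  have d8 : ∀ a : D3, a + 2 + 1 = a := by decide
  by_cases h2 : ∀ i, x i ≠ 2
  · rw [ffA x h2, ffB hn _ (fun i => (d1 _).2 (h2 i))]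
    simp only [d4]
  by_cases h0 : ∀ i, x i ≠ 0
  · rw [ffB hn x h0, ffC hn _ (fun i => (d2 _).2 (h0 i)), d7]
    simp only [d5]
  by_cases h1 : ∀ i, x i ≠ 1
  · rw [ffC hn x h1, ffA _ (fun i => (d3 _).2 (h1 i)), d8]
    simp only [d6]
  · unfold ff
    simp only [d1, d2, d3, if_neg h2, if_neg h0, if_neg h1]

lemma gg_cases {m : ℕ} (x : Fin m → D3) : gg x = 0 ∨ gg x = 1 := by
  unfold gg; split_ifs <;> simp

lemma gg_eq_zero {m : ℕ} (x : Fin m → D3) :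
    gg x = 0 ↔ (Finset.univ.filter fun i => x i = 1).card ≤ 1 := by
  unfold gg; split_ifs with h
  · simp; omega
  · simp; omega

lemma ff_nu0 {n : ℕ} (hn : 2 ≤ n) (y : D3) (j : Fin (n+1)) :
    ff (fun i => if i = j then y else 0) = 0 := by
  by_cases hy : y = 2
  · subst hy
    rw [ffC hn _ (by intro i; split_ifs <;> decide)]
    have : gg (fun i => (if i = j then (2:D3) else 0) - 2) = 1 := by
      unfold gg
      have e : (Finset.univ.filter fun i => (if i = j then (2:D3) else 0) - 2 = 1)
          = Finset.univ.erase j := by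
        ext i
        by_cases h : i = j
        · simp [h]
        · simp [h]; decide
      rw [e, Finset.card_erase_of_mem (Finset.mem_univ _), Finset.card_univ, Fintype.card_fin,
        if_pos (by omega)]
    rw [this]; decide
  · rw [ffA _ (by intro i; split_ifs; exacts [hy, by decide]), gg_eq_zero]
    rw [Finset.card_le_one]
    have key : ∀ a, (if a = j then y else (0:D3)) = 1 → a = j := by
      intro a h
      by_contra hc
      simp [hc] at h
    intro a ha b hb
    rw [key a (by simpa using ha), key b (by simpa using hb)]

lemma ff_nu {n : ℕ} (hn : 2 ≤ n) (x y : D3) (j : Fin (n+1)) :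
    ff (fun i => if i = j then y else x) = x := by
  have e1 : ∀ (x y : D3), ff (fun i => if i = j then y else x) = x →
      ff (fun i => if i = j then y + 1 else x + 1) = x + 1 := by
    intro x y h
    have := ff_shift hn (fun i => if i = j then y else x)
    rw [h] at this
    refine Eq.trans ?_ this
    congr 1; funext i; split_ifs <;> rfl
  have e2 := ff_nu0 hn (y := y) (j := j)
  have e3 := e1 _ _ (ff_nu0 hn (y := y - 1) (j := j))
  have e4 := e1 _ _ (e1 _ _ (ff_nu0 hn (y := y - 2) (j := j)))
  have d3 : ∀ y : D3, y - 1 + 1 = y := by decide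
  have d4 : ∀ y : D3, y - 2 + 1 + 1 = y := by decide
  rw [d3] at e3
  rw [d4] at e4
  have hx : x = 0 ∨ x = 0 + 1 ∨ x = 0 + 1 + 1 := by revert x; decide
  rcases hx with rfl | rfl | rfl
  exacts [e2, e3, e4]

lemma mem_C3 (t : Fin 2 → D3) : t ∈ C3rel ↔ t 1 = t 0 + 1 := by
  simp only [C3rel, Set.mem_ofPred_eq]
  generalize t 0 = a
  generalize t 1 = b
  revert a b; decide

lemma pos_part {n : ℕ} (hn : 2 ≤ n) : ∃ t : Op (n + 1), Preserves t C3rel ∧ Preserves t le2rel ∧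
        (∀ k, 2 ≤ k → k ≤ n → Preserves t (BnRel k)) ∧ QNU t := by
  refine ⟨ff, ?_, ?_, ?_, ?_⟩
  · intro t ht
    rw [mem_C3]
    simp only [mem_C3] at ht
    simp only [ht]
    exact ff_shift hn _
  · intro t ht
    have h0 : ∀ i, t i 0 ≠ 2 := by
      intro i
      rcases ht i with h | h | h <;> rw [h.1] <;> decide
    have h1 : ∀ i, t i 1 ≠ 2 := by
      intro i
      rcases ht i with h | h | h <;> rw [h.2] <;> decide
    have hm : ∀ i, t i 0 = 1 → t i 1 = 1 := by
      intro i hi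
      rcases ht i with h | h | h <;> simp_all
    simp only [le2rel, Set.mem_ofPred_eq]
    rw [ffA _ h0, ffA _ h1]
    have hle : (Finset.univ.filter fun i => t i 0 = 1).card ≤
        (Finset.univ.filter fun i => t i 1 = 1).card := by
      apply Finset.card_le_card
      intro i
      simpa using hm i
    rcases gg_cases (fun i => t i 0) with a | a <;> rcases gg_cases (fun i => t i 1) with b | b
    · simp [a, b]
    · simp [a, b]
    · exfalso
      rw [gg_eq_zero] at b
      have := (gg_eq_zero (fun i => t i 0)).2 (by omega)
      rw [a] at this
      exact absurd this (by decide)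
    · simp [a, b]
  · intro k _ hk t ht
    have h2 : ∀ j i, t i j ≠ 2 := by
      intro j i
      rcases (ht i).1 j with h | h <;> rw [h] <;> decide
    have e : ∀ j, ff (fun i => t i j) = gg (fun i => t i j) := fun j => ffA _ (h2 j)
    refine ⟨fun j => ?_, fun hz => ?_⟩
    · show ff _ = 0 ∨ ff _ = 1
      rw [e]; exact gg_cases _
    · have hc : ∀ j, (Finset.univ.filter fun i => t i j = 1).card ≤ 1 := by
        intro j
        rw [← gg_eq_zero, ← e]; exact hz j
      have hex : ∀ i, ∃ j, t i j = 1 := by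
        intro i
        by_contra hcon
        push Not at hcon
        exact (ht i).2 fun j => ((ht i).1 j).resolve_right (hcon j)
      choose p hp using hex
      have inj : Function.Injective p := by
        intro a b hab
        refine Finset.card_le_one.1 (hc (p a)) a ?_ b ?_
        · simpa using hp a
        · simpa [hab] using hp b
      have := Fintype.card_le_of_injective p inj
      simp at this
      omega
  · intro x y j
    have h := ff_nu hn x x j
    simp only [ite_self] at h
    rw [ff_nu hn x y j, h]

lemma neg_part {n : ℕ} (hn : 2 ≤ n) : ¬ (∃ t : Op (n + 1), Preserves t C3rel ∧
        (∀ k, 2 ≤ k → k ≤ n + 1 → Preserves t (BnRel k)) ∧ QNU t) := by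
  rintro ⟨t, hC, hB, hQ⟩
  have h1 : t (fun _ => 1) = 1 := by
    have := hB 2 le_rfl (by omega) (fun _ _ => 1) (fun _ => ⟨fun _ => Or.inr rfl, by simp⟩)
    obtain ⟨a, b⟩ := this
    rcases a 0 with h | h
    · exact absurd (fun _ => h) b
    · exact h
  have h0 : t (fun _ => 0) = 0 := by
    have := hC (fun _ j => if j = 0 then 0 else 1) (fun _ => Or.inl (by simp))
    rw [mem_C3] at this
    simp [h1] at this
    exact this
  obtain ⟨_, b⟩ := hB (n+1) (by omega) le_rfl (fun i j => if i = j then 1 else 0)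
    (fun i => ⟨fun j => by by_cases h : i = j <;> simp [h], fun h => by simpa using h i⟩)
  apply b
  intro j
  show t (fun i => if i = j then 1 else 0) = 0
  rw [hQ 0 1 j, h0]

/-- For every `n ≥ 2`: `QNU(n+1)` can be realized by an operation preserving `C₃`, `≤₂` and
`B_k` for `2 ≤ k ≤ n`, but not by an operation preserving `C₃` and `B_k` for
`2 ≤ k ≤ n+1`. -/
theorem stmt18 :
    ∀ n : ℕ, 2 ≤ n →
      (∃ t : Op (n + 1), Preserves t C3rel ∧ Preserves t le2rel ∧
        (∀ k, 2 ≤ k → k ≤ n → Preserves t (BnRel k)) ∧ QNU t) ∧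
      ¬ (∃ t : Op (n + 1), Preserves t C3rel ∧
        (∀ k, 2 ≤ k → k ≤ n + 1 → Preserves t (BnRel k)) ∧ QNU t) := by
  exact fun n hn => ⟨pos_part hn, neg_part hn⟩
end
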